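/- (Extension of Markov's Theorem) For all l ≥ 0, m ≥ 0 and every real s < ζ_l, the limit lim_{n→∞} Q^{(m+l+1)}_{n−m−1}(s)/Q^{(l)}_n(s) exists and ∫_{[0,∞)} Q_m^{(l)}(x)/(x − s) ψ^{(l)}(dx) = (π_l/(λ_{m+l}π_{m+l})) · lim_{n→∞} Q^{(m+l+1)}_{n−m−1}(s)/Q^{(l)}_n(s). -/

import Mathlib

open Filter Topology ENNReal MeasureTheory

/-- Dividing by `x - s` preserves integrability when `s` lies strictly below the support. -/
lemma integrable_div_sub {ν : Measure ℝ} {f : ℝ → ℝ} (hf : Integrable f ν) {z s : ℝ}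
    (hz : ∀ᵐ x ∂ν, z ≤ x) (hs : s < z) : Integrable (fun x => f x / (x - s)) ν := by
  have hm : AEStronglyMeasurable (fun x => f x / (x - s)) ν := by
    have := hf.aestronglyMeasurable.mul
      (show Measurable fun x : ℝ => (x - s)⁻¹ by fun_prop).aestronglyMeasurable
    simpa only [div_eq_mul_inv, Pi.mul_def] using this
  refine (hf.norm.div_const (z - s)).mono' hm ?_
  filter_upwards [hz] with x hx
  rw [norm_div, Real.norm_of_nonneg (r := x - s) (by linarith)]
  have : 0 < z - s := by linarith
  gcongr

lemma tendsto_neg_div_sub_atBot (x : ℝ) : Tendsto (fun s : ℝ => -s / (x - s)) atBot (𝓝 1) := by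
  have h : Tendsto (fun s : ℝ => 1 - x / (x - s)) atBot (𝓝 (1 - 0)) := by
    refine tendsto_const_nhds.sub (tendsto_const_nhds.div_atTop ?_)
    exact (tendsto_atTop_add_const_left _ x tendsto_neg_atBot_atTop).congr
      fun s => (sub_eq_add_neg x s).symm
  rw [sub_zero] at h
  refine h.congr' ?_
  filter_upwards [eventually_lt_atBot x] with s hs
  have : x - s ≠ 0 := by linarith
  field_simp
  ring

lemma abs_neg_div_sub_le_one {x s : ℝ} (hx : 0 ≤ x) (hs : s < 0) : |-s / (x - s)| ≤ 1 := by
  rw [abs_of_nonneg (div_nonneg (by linarith) (by linarith)), div_le_one (by linarith)]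
  linarith

/-- The Stieltjes transform of an integrable function, rescaled, recovers its integral. -/
lemma tendsto_neg_mul_integral_div_sub {ν : Measure ℝ} {f : ℝ → ℝ} (hf : Integrable f ν)
    (h0 : ∀ᵐ x ∂ν, 0 ≤ x) :
    Tendsto (fun s : ℝ => -s * ∫ x, f x / (x - s) ∂ν) atBot (𝓝 (∫ x, f x ∂ν)) := by
  have hrw (s : ℝ) : -s * ∫ x, f x / (x - s) ∂ν = ∫ x, f x * (-s / (x - s)) ∂ν := by
    rw [← integral_const_mul]
    congr 1 with x
    ring
  simp only [hrw]
  refine tendsto_integral_filter_of_dominated_convergence (fun x => ‖f x‖) ?_ ?_ hf.norm ?_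
  · exact .of_forall fun s => hf.aestronglyMeasurable.mul
      (show Measurable fun x : ℝ => -s / (x - s) by fun_prop).aestronglyMeasurable
  · filter_upwards [eventually_lt_atBot (0 : ℝ)] with s hs
    filter_upwards [h0] with x hx
    rw [norm_mul]
    exact mul_le_of_le_one_right (norm_nonneg _) (abs_neg_div_sub_le_one hx hs)
  · refine .of_forall fun x => ?_
    simpa using (tendsto_neg_div_sub_atBot x).const_mul (f x)

/-- A nonnegative function whose rescaled Stieltjes transform converges is integrable. -/
lemma integrable_of_tendsto_neg_mul_integral_div_sub {ν : Measure ℝ} {f : ℝ → ℝ}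
    (hfm : Measurable f) (h0 : ∀ᵐ x ∂ν, 0 ≤ x) (hf0 : ∀ᵐ x ∂ν, 0 ≤ f x)
    (hint : ∀ s < 0, Integrable (fun x => f x / (x - s)) ν) {c : ℝ}
    (hc : Tendsto (fun s : ℝ => -s * ∫ x, f x / (x - s) ∂ν) atBot (𝓝 c)) :
    Integrable f ν := by
  have hu : Tendsto (fun k : ℕ => -((k : ℝ) + 1)) atTop atBot :=
    tendsto_neg_atTop_atBot.comp (tendsto_atTop_add_const_right _ _ tendsto_natCast_atTop_atTop)
  set g : ℕ → ℝ → ℝ := fun k x => ((k : ℝ) + 1) * (f x / (x - -((k : ℝ) + 1))) with hg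
  have hneg (k : ℕ) : -((k : ℝ) + 1) < 0 := by linarith [k.cast_nonneg (α := ℝ)]
  have hgint (k : ℕ) : Integrable (g k) ν := (hint _ (hneg k)).const_mul _
  have hg0 (k : ℕ) : 0 ≤ᵐ[ν] g k := by
    filter_upwards [h0, hf0] with x hx hfx
    have := hneg k
    exact mul_nonneg (by linarith) (div_nonneg hfx (by linarith))
  have hlim : Tendsto (fun k => ∫⁻ x, ENNReal.ofReal (g k x) ∂ν) atTop (𝓝 (ENNReal.ofReal c)) := by
    simp only [← fun k => ofReal_integral_eq_lintegral_ofReal (hgint k) (hg0 k)]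
    refine (ENNReal.continuous_ofReal.tendsto c).comp ?_
    simpa only [hg, integral_const_mul, Function.comp_def, neg_neg] using hc.comp hu
  have hpt (x : ℝ) : Tendsto (fun k => ENNReal.ofReal (g k x)) atTop
      (𝓝 (ENNReal.ofReal (f x))) := by
    refine (ENNReal.continuous_ofReal.tendsto _).comp ?_
    have := ((tendsto_neg_div_sub_atBot x).comp hu).const_mul (f x)
    rw [mul_one] at this
    refine this.congr fun k => ?_
    simp only [hg, Function.comp_def]
    ring
  refine ⟨hfm.aestronglyMeasurable, ?_⟩
  rw [hasFiniteIntegral_iff_ofReal hf0]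
  calc ∫⁻ x, ENNReal.ofReal (f x) ∂ν
      = ∫⁻ x, liminf (fun k => ENNReal.ofReal (g k x)) atTop ∂ν := by
        simp only [fun x => (hpt x).liminf_eq]
    _ ≤ liminf (fun k => ∫⁻ x, ENNReal.ofReal (g k x) ∂ν) atTop :=
        lintegral_liminf_le fun k => by fun_prop
    _ = ENNReal.ofReal c := hlim.liminf_eq
    _ < ⊤ := ENNReal.ofReal_lt_top

lemma integrable_polynomial_eval {ν : Measure ℝ} {n : ℕ} {p : Polynomial ℝ}
    (hp : p.natDegree ≤ n) (hmom : ∀ j ≤ n, Integrable (fun x : ℝ => x ^ j) ν) :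
    Integrable (fun x => p.eval x) ν := by
  simp only [fun x => Polynomial.eval_eq_sum_range' (Nat.lt_succ_of_le hp) x]
  exact integrable_finsetSum _ fun j hj =>
    (hmom j (by simpa [Nat.lt_succ_iff] using hj)).const_mul _

lemma integrable_pow_succ_div_sub {ν : Measure ℝ} {n : ℕ} {z s : ℝ}
    (hn : Integrable (fun x : ℝ => x ^ n) ν) (hz : ∀ᵐ x ∂ν, z ≤ x) (hs : s < z) :
    Integrable (fun x : ℝ => x ^ (n + 1) / (x - s)) ν := by
  refine (hn.add ((integrable_div_sub hn hz hs).const_mul s)).congr ?_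
  filter_upwards [hz] with x hx
  have : x - s ≠ 0 := by linarith
  simp only [Pi.add_apply]
  field_simp
  ring

/-- If the lower moments exist and the rescaled Stieltjes transform of a polynomial of degree
`n + 1` converges, then the moment of order `n + 1` exists. -/
lemma integrable_pow_succ_of_tendsto {ν : Measure ℝ} (h0 : ∀ᵐ x ∂ν, 0 ≤ x) {n : ℕ}
    {p : Polynomial ℝ} (hp : p.natDegree ≤ n + 1) (hlead : p.coeff (n + 1) ≠ 0)
    (hmom : ∀ j ≤ n, Integrable (fun x : ℝ => x ^ j) ν) {c : ℝ}
    (hc : Tendsto (fun s : ℝ => -s * ∫ x, p.eval x / (x - s) ∂ν) atBot (𝓝 c)) :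
    Integrable (fun x : ℝ => x ^ (n + 1)) ν := by
  set a := p.coeff (n + 1) with ha
  set r : Polynomial ℝ := p - Polynomial.C a * Polynomial.X ^ (n + 1) with hr
  have hrdeg : r.natDegree ≤ n := by
    rw [Polynomial.natDegree_le_iff_coeff_eq_zero]
    intro k hk
    rcases eq_or_ne k (n + 1) with rfl | hne
    · simp [hr, ha]
    · have : p.coeff k = 0 := Polynomial.coeff_eq_zero_of_natDegree_lt (by omega)
      simp [hr, this, Polynomial.coeff_X_pow, hne]
  have hrint := integrable_polynomial_eval hrdeg hmom
  have hpow (s : ℝ) (hs : s < 0) := integrable_pow_succ_div_sub (hmom n le_rfl) h0 hs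
  refine integrable_of_tendsto_neg_mul_integral_div_sub (by fun_prop) h0 ?_ hpow
    (c := a⁻¹ * (c - ∫ x, r.eval x ∂ν)) ?_
  · filter_upwards [h0] with x hx using pow_nonneg hx _
  · refine ((hc.sub (tendsto_neg_mul_integral_div_sub hrint h0)).const_mul a⁻¹).congr' ?_
    filter_upwards [eventually_lt_atBot (0 : ℝ)] with s hs
    have : ∫ x, p.eval x / (x - s) ∂ν
        = a * ∫ x, x ^ (n + 1) / (x - s) ∂ν + ∫ x, r.eval x / (x - s) ∂ν := by
      rw [← integral_const_mul,
        ← integral_add ((hpow s hs).const_mul a) (integrable_div_sub hrint h0 hs)]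
      congr 1 with x
      simp only [hr, Polynomial.eval_sub, Polynomial.eval_mul, Polynomial.eval_C,
        Polynomial.eval_pow, Polynomial.eval_X]
      ring
    rw [this]
    field_simp
    ring

/-- Functions satisfying the three-term recurrence are polynomials of exact degree `n`. -/
lemma exists_polynomial_of_recurrence {a b d : ℕ → ℝ} (ha : ∀ n, a n ≠ 0) {q : ℕ → ℝ → ℝ}
    (hq0 : ∀ x, q 0 x = 1) (hq1 : ∀ x, a 0 * q 1 x = b 0 - x)
    (hq : ∀ n x, a (n + 1) * q (n + 2) x = (b (n + 1) - x) * q (n + 1) x - d (n + 1) * q n x)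
    (n : ℕ) : ∃ p : Polynomial ℝ, p.natDegree ≤ n ∧ p.coeff n ≠ 0 ∧ ∀ x, q n x = p.eval x := by
  open Polynomial in
  induction n using Nat.twoStepInduction with
  | zero => exact ⟨1, by simp, by simp, by simpa using hq0⟩
  | one =>
    refine ⟨C (a 0)⁻¹ * (C (b 0) - X), by compute_degree, by simp [ha 0], fun x => ?_⟩
    have := ha 0
    simp only [eval_mul, eval_C, eval_sub, eval_X, ← hq1]
    field_simp
  | more n ih ih' =>
    obtain ⟨p, hp, -, hpq⟩ := ih
    obtain ⟨p', hp', hlead, hpq'⟩ := ih'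
    refine ⟨C (a (n + 1))⁻¹ * ((C (b (n + 1)) - X) * p' - C (d (n + 1)) * p), ?_, ?_, fun x => ?_⟩
    · refine (natDegree_C_mul_le _ _).trans ((natDegree_sub_le _ _).trans (max_le ?_ ?_))
      · refine natDegree_mul_le.trans ?_
        have : (C (b (n + 1)) - X : ℝ[X]).natDegree ≤ 1 := by compute_degree
        omega
      · exact (natDegree_C_mul_le _ _).trans (by omega)
    · have h1 : p'.coeff (n + 2) = 0 := coeff_eq_zero_of_natDegree_lt (by omega)
      have h2 : p.coeff (n + 2) = 0 := coeff_eq_zero_of_natDegree_lt (by omega)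
      simp only [coeff_C_mul, coeff_sub, sub_mul, coeff_X_mul, h1, h2]
      simpa [ha (n + 1)] using hlead
    · have := ha (n + 1)
      simp only [eval_mul, eval_C, eval_sub, eval_X, ← hpq, ← hpq', ← hq]
      field_simp

/-- If Stieltjes-type functions `F n` satisfy the continued-fraction relation associated with the
three-term recurrence of `q`, and `F 0` is the Stieltjes transform of `ν`, then the transform of
`q n` is a product of the `F j`. -/
lemma integral_recurrence_div_sub {ν : Measure ℝ} [IsProbabilityMeasure ν] {z : ℝ} (hz0 : 0 ≤ z)
    (hz : ∀ᵐ x ∂ν, z ≤ x) {a b d : ℕ → ℝ} (ha : ∀ n, a n ≠ 0) {q : ℕ → ℝ → ℝ}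
    (hq0 : ∀ x, q 0 x = 1) (hq1 : ∀ x, a 0 * q 1 x = b 0 - x)
    (hq : ∀ n x, a (n + 1) * q (n + 2) x = (b (n + 1) - x) * q (n + 1) x - d (n + 1) * q n x)
    {F : ℕ → ℝ → ℝ} (hF0 : ∀ s, F 0 s = ∫ x, (x - s)⁻¹ ∂ν)
    (hF : ∀ n, ∀ s < z, (b n - s - a n * d (n + 1) * F (n + 1) s) * F n s = 1)
    (hFlim : ∀ n, Tendsto (F n) atBot (𝓝 0)) (n : ℕ) {s : ℝ} (hs : s < z) :
    ∫ x, q n x / (x - s) ∂ν = F 0 s * ∏ j ∈ Finset.range n, d (j + 1) * F (j + 1) s := by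
  have h0 : ∀ᵐ x ∂ν, 0 ≤ x := hz.mono fun x hx => hz0.trans hx
  have hpoly := exists_polynomial_of_recurrence ha hq0 hq1 hq
  have hbase (s : ℝ) : ∫ x, q 0 x / (x - s) ∂ν = F 0 s := by simp [hq0, hF0]
  have hscale : Tendsto (fun s => -s * F 0 s) atBot (𝓝 1) := by
    have := tendsto_neg_mul_integral_div_sub (integrable_const (μ := ν) (1 : ℝ)) h0
    simpa [hF0] using this
  have hprod (n : ℕ) : Tendsto
      (fun s => -s * (F 0 s * ∏ j ∈ Finset.range (n + 1), d (j + 1) * F (j + 1) s)) atBot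
      (𝓝 0) := by
    have h1 : Tendsto (fun s => ∏ j ∈ Finset.range (n + 1), d (j + 1) * F (j + 1) s) atBot
        (𝓝 (∏ j ∈ Finset.range (n + 1), d (j + 1) * 0)) :=
      tendsto_finsetProd _ fun j _ => (hFlim (j + 1)).const_mul _
    have h2 := hscale.mul h1
    simpa [mul_assoc] using h2
  have hlin (k : ℕ) (hk : Integrable (q k) ν) (s : ℝ) (hs : s < z) :
      Integrable (fun x => (b k - x) * q k x / (x - s)) ν ∧
      ∫ x, (b k - x) * q k x / (x - s) ∂ν
        = (b k - s) * ∫ x, q k x / (x - s) ∂ν - ∫ x, q k x ∂ν := by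
    have hI := (integrable_div_sub hk hz hs).const_mul (b k - s)
    have hE : (fun x => (b k - s) * (q k x / (x - s)) - q k x)
        =ᵐ[ν] fun x => (b k - x) * q k x / (x - s) := by
      filter_upwards [hz] with x hx
      have : x - s ≠ 0 := by linarith
      field_simp
      ring
    refine ⟨(hI.sub hk).congr hE, ?_⟩
    rw [← integral_congr_ae hE, integral_sub hI hk, integral_const_mul]
  have key (n : ℕ) : (∀ j ≤ n, Integrable (fun x : ℝ => x ^ j) ν) ∧ ∀ j ≤ n, ∀ s < z,
      ∫ x, q j x / (x - s) ∂ν = F 0 s * ∏ i ∈ Finset.range j, d (i + 1) * F (i + 1) s := by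
    induction n with
    | zero => simp [hbase]
    | succ n ih =>
      obtain ⟨hmom, hval⟩ := ih
      have hqint (j : ℕ) (hj : j ≤ n) : Integrable (q j) ν := by
        obtain ⟨p, hp, -, hpq⟩ := hpoly j
        rw [show q j = fun x => p.eval x from funext hpq]
        exact integrable_polynomial_eval (hp.trans hj) hmom
      have hnew (s : ℝ) (hs : s < z) : ∫ x, q (n + 1) x / (x - s) ∂ν
          = F 0 s * ∏ i ∈ Finset.range (n + 1), d (i + 1) * F (i + 1) s := by
        have hcf := hF n s hs
        apply mul_left_cancel₀ (ha n)
        rw [← integral_const_mul]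
        cases n with
        | zero =>
          have h1 := (hlin 0 (hqint 0 le_rfl) s hs).2
          rw [hbase] at h1
          simp only [hq0, mul_one, integral_const, probReal_univ, smul_eq_mul] at h1
          simp only [← mul_div_assoc, zero_add, hq1, h1, Finset.prod_range_one]
          rw [zero_add] at hcf
          linear_combination hcf
        | succ k =>
          have horth : ∫ x, q (k + 1) x ∂ν = 0 := by
            refine tendsto_nhds_unique
              (tendsto_neg_mul_integral_div_sub (hqint (k + 1) le_rfl) h0) ((hprod k).congr' ?_)
            filter_upwards [eventually_lt_atBot z] with s hs
            rw [hval (k + 1) le_rfl s hs]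
          obtain ⟨hI, hE⟩ := hlin (k + 1) (hqint (k + 1) le_rfl) s hs
          have hI' := (integrable_div_sub (hqint k (by omega)) hz hs).const_mul (d (k + 1))
          have : ∀ x, a (k + 1) * (q (k + 1 + 1) x / (x - s))
              = (b (k + 1) - x) * q (k + 1) x / (x - s) - d (k + 1) * (q k x / (x - s)) := by
            intro x
            rw [← mul_div_assoc, hq k x]
            ring
          simp only [this]
          rw [integral_sub hI hI', hE, integral_const_mul, horth, hval (k + 1) le_rfl s hs,
            hval k (by omega) s hs]
          simp only [Finset.prod_range_succ]
          linear_combination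
            (F 0 s * (∏ i ∈ Finset.range k, d (i + 1) * F (i + 1) s) * d (k + 1)) * hcf
      refine ⟨fun j hj => ?_, fun j hj => ?_⟩
      · rcases Nat.le_succ_iff.mp hj with hj | rfl
        · exact hmom j hj
        · obtain ⟨p, hp, hlead, hpq⟩ := hpoly (n + 1)
          refine integrable_pow_succ_of_tendsto h0 hp hlead hmom ((hprod n).congr' ?_)
          filter_upwards [eventually_lt_atBot z] with s hs
          rw [← hnew s hs]
          simp only [hpq]
      · rcases Nat.le_succ_iff.mp hj with hj | rfl
        · exact hval j hj
        · exact hnew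
  exact (key n).2 n le_rfl s hs

/-- The Stieltjes transform of a probability measure is positive to the left of the support. -/
lemma integral_inv_sub_pos {ν : Measure ℝ} [IsProbabilityMeasure ν] {z s : ℝ}
    (hz : ∀ᵐ x ∂ν, z ≤ x) (hs : s < z) : 0 < ∫ x, (x - s)⁻¹ ∂ν := by
  have hint : Integrable (fun x => (x - s)⁻¹) ν := by
    simpa using integrable_div_sub (integrable_const (1 : ℝ)) hz hs
  have hpos : ∀ᵐ x ∂ν, 0 < (x - s)⁻¹ := hz.mono fun x hx => inv_pos.mpr (by linarith)
  refine (integral_nonneg_of_ae (hpos.mono fun x hx => hx.le)).lt_of_ne fun h => ?_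
  have h0 := (integral_eq_zero_iff_of_nonneg_ae (hpos.mono fun x hx => hx.le) hint).mp h.symm
  have hfalse : ∀ᵐ x ∂ν, False := by
    filter_upwards [h0, hpos] with x h1 h2
    exact h2.ne' h1
  exact hfalse.exists.elim fun _ h => h

lemma tendsto_integral_inv_sub_atBot {ν : Measure ℝ} [IsProbabilityMeasure ν]
    (h0 : ∀ᵐ x ∂ν, 0 ≤ x) : Tendsto (fun s => ∫ x, (x - s)⁻¹ ∂ν) atBot (𝓝 0) := by
  have h := (tendsto_neg_mul_integral_div_sub (integrable_const (μ := ν) (1 : ℝ)) h0).mul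
    (tendsto_inv_atTop_zero.comp tendsto_neg_atBot_atTop)
  rw [mul_zero] at h
  refine h.congr' ?_
  filter_upwards [eventually_lt_atBot (0 : ℝ)] with s hs
  have : s ≠ 0 := hs.ne
  simp only [one_div, Function.comp_def]
  field_simp

theorem stmt19
    (lam mu : ℕ → ℝ) (pi : ℕ → ℝ)
    (hlam : ∀ n, 0 < lam n) (hmu0 : 0 ≤ mu 0) (hmu : ∀ n, 1 ≤ n → 0 < mu n)
    (hpi0 : pi 0 = 1) (hpi : ∀ n, pi (n + 1) = pi n * lam n / mu (n + 1))
    (Q : ℕ → ℕ → ℝ → ℝ)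
    (hQ0 : ∀ l x, Q l 0 x = 1)
    (hQ1 : ∀ l x, lam l * Q l 1 x = lam l + mu l - x)
    (hQrec : ∀ l n x, lam (n + 1 + l) * Q l (n + 2) x
      = (lam (n + 1 + l) + mu (n + 1 + l) - x) * Q l (n + 1) x - mu (n + 1 + l) * Q l n x)
    (ψ : ℕ → Measure ℝ) (hprob : ∀ l, IsProbabilityMeasure (ψ l))
    (hsupp : ∀ l, ψ l (Set.Iio 0) = 0)
    (ζ : ℕ → ℝ) (hζ0 : ∀ l, 0 ≤ ζ l) (hζmono : Monotone ζ)
    (hζ : ∀ l, IsGreatest {t : ℝ | ψ l (Set.Iio t) = 0} (ζ l))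
    (hMarkov : ∀ l, ∀ s : ℝ, s < ζ l →
      Tendsto (fun n => (1 / lam l) * (Q (l + 1) (n - 1) s / Q l n s)) atTop
        (nhds (∫ x, (x - s)⁻¹ ∂ψ l)))
    (hCF : ∀ l, ∀ s : ℝ, s < ζ l →
      ∫ x, (x - s)⁻¹ ∂ψ l =
        (lam l + mu l - s - lam l * mu (l + 1) * ∫ x, (x - s)⁻¹ ∂ψ (l + 1))⁻¹) :
    ∀ l m, ∀ s : ℝ, s < ζ l →
      ∃ Lim : ℝ,
        Tendsto (fun n => Q (m + l + 1) (n - m - 1) s / Q l n s) atTop (nhds Lim) ∧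
          ∫ x, Q l m x / (x - s) ∂ψ l = pi l / (lam (m + l) * pi (m + l)) * Lim := by
  intro l m s hs
  have hae (k : ℕ) : ∀ᵐ x ∂ψ k, ζ k ≤ x := by
    have h : ψ k (Set.Iio (ζ k)) = 0 := (hζ k).1
    simpa [ae_iff, Set.Iio_def] using h
  have hae0 (k : ℕ) : ∀ᵐ x ∂ψ k, 0 ≤ x := (hae k).mono fun x hx => (hζ0 k).trans hx
  have hle (k : ℕ) : ζ l ≤ ζ (k + l) := hζmono (by omega)
  have hFpos (k : ℕ) {t : ℝ} (ht : t < ζ l) : 0 < ∫ x, (x - t)⁻¹ ∂ψ (k + l) :=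
    integral_inv_sub_pos (hae _) (ht.trans_le (hle k))
  have hpipos (n : ℕ) : 0 < pi n := by
    induction n with
    | zero => simp [hpi0]
    | succ n ih =>
      rw [hpi]
      exact div_pos (mul_pos ih (hlam n)) (hmu _ (by omega))
  have hint := integral_recurrence_div_sub (ν := ψ l) (hζ0 l) (hae l)
    (a := fun n => lam (n + l)) (b := fun n => lam (n + l) + mu (n + l))
    (d := fun n => mu (n + l)) (q := Q l) (F := fun n t => ∫ x, (x - t)⁻¹ ∂ψ (n + l))
    (fun n => (hlam _).ne') (hQ0 l) (by simpa using hQ1 l) (hQrec l) (by simp)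
    (fun n t ht => by
      have hpos := hFpos n ht
      have hcf := hCF (n + l) t (ht.trans_le (hle n))
      rw [show n + l + 1 = n + 1 + l by ring] at hcf
      rw [← inv_inv (∫ x, (x - t)⁻¹ ∂ψ (n + l)), inv_eq_iff_eq_inv.mpr hcf]
      refine mul_inv_cancel₀ fun h => hpos.ne' ?_
      rw [hcf, h, _root_.inv_zero])
    (fun n => tendsto_integral_inv_sub_atBot (hae0 _)) m hs
  have hratio (k : ℕ) : Tendsto (fun n => Q (k + l + 1) (n - k - 1) s / Q (k + l) (n - k) s) atTop
      (𝓝 (lam (k + l) * ∫ x, (x - s)⁻¹ ∂ψ (k + l))) := by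
    have h := ((hMarkov (k + l) s (hs.trans_le (hle k))).const_mul (lam (k + l))).comp
      (tendsto_sub_atTop_nat k)
    refine h.congr fun n => ?_
    have := (hlam (k + l)).ne'
    simp only [Function.comp_def]
    field_simp
  have hlim (k : ℕ) : Tendsto (fun n => Q (k + l + 1) (n - k - 1) s / Q l n s) atTop
      (𝓝 (∏ j ∈ Finset.range (k + 1), lam (j + l) * ∫ x, (x - s)⁻¹ ∂ψ (j + l))) := by
    induction k with
    | zero => simpa using hratio 0
    | succ k ih =>
      rw [Finset.prod_range_succ]
      have hne := (hratio (k + 1)).eventually_ne (mul_pos (hlam _) (hFpos (k + 1) hs)).ne'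
      refine (ih.mul (hratio (k + 1))).congr' ?_
      filter_upwards [hne] with n hn
      have hden : Q (k + 1 + l) (n - (k + 1)) s ≠ 0 := (div_ne_zero_iff.mp hn).2
      rw [show k + l + 1 = k + 1 + l by ring, show n - k - 1 = n - (k + 1) by omega]
      rw [mul_comm, div_mul_div_cancel₀ hden]
  refine ⟨_, hlim m, ?_⟩
  rw [hint]
  clear hint
  induction m with
  | zero =>
    have h1 := (hlam l).ne'
    have h2 := (hpipos l).ne'
    simp
    field_simp
  | succ m ih =>
    rw [Finset.prod_range_succ, ← mul_assoc, ih, Finset.prod_range_succ _ (m + 1),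
      show m + 1 + l = m + l + 1 by ring, hpi]
    have h1 := (hlam (m + l)).ne'
    have h2 := (hlam (m + l + 1)).ne'
    have h3 := (hpipos (m + l)).ne'
    have h4 := (hmu (m + l + 1) (by omega)).ne'
    field_simp
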